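/- Let r ∈ ℝ, T > 0, p > 4, R > 0, N ≥ 1, and let σ : [0,∞)×ℝ → ℝ be measurable with |σ(x,u)| ≤ R(e^{rx}+|u|) for all x ≥ 0, u ∈ ℝ. Let u : [0,T]×[0,∞) → ℝ be continuous with ‖u‖_{C_r^T} < ∞, let h ∈ L²([0,T]×[0,∞)) with ∫_0^T∫_0^∞ h(s,y)² dy ds ≤ N², and define F(t,x) := ∫_0^t ∫_0^∞ G(t−s,x,y) σ(y,u(s,y)) h(s,y) dy ds. Then there exists a constant C = C(r,p,T) > 0 such that for all s, t ∈ [0,T] and all x ≥ 0, | e^{−rx} F(s,x) − e^{−rx} F(t,x) |^p ≤ C R^p N^p T ( 1 + ‖u‖_{C_r^T} )^p |s−t|^{(p−4)/4}. -/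

import Mathlib

/-!
Write `G` by the method of images through the Gaussian `g_t` on the line. Since `|x - z| ≤ x + z` on
the half-line, the weight `e^{-r(x-z)}` costs at most `e^{|r||w|}` on either image, so everything
reduces to weighted `L²` norms of Gaussians, which completing the square computes exactly:
`∫ e^{2κw} g_a(w) g_c(w) dw = (4π(a+c))^{-1/2} e^{4κ²ac/(a+c)}`. Hence, for `a ≤ c`,
`∫ e^{2κw} (g_a - g_c)² dw` is, up to constants, at most `a^{-1/2} - c^{-1/2} + κ² (c - a)^{1/2}`.

Split `F(t) - F(s)`, `s ≤ t`, into the contribution of source times in `(0,s]`, where the kernel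
changes, and in `(s,t]`, where only the later kernel is present. With `a = s - v` and `c = t - v`,
the integral over `v` of the bound above is of order `(t - s)^{1/2}`, and so is that of the squared
norm `(t - v)^{-1/2}` over `(s,t]`. By Cauchy–Schwarz the weighted `F` is Hölder continuous in time
with exponent `1/4`. In the `p`-th power, one factor `|t - s|` out of `|t - s|^{p/4}` is bounded
by `T`.
-/

open MeasureTheory Real Set Filter

/-- Dirichlet heat kernel on `[0,∞)`. -/
noncomputable def G (t x y : ℝ) : ℝ :=
  (Real.sqrt (4 * Real.pi * t))⁻¹ *
    (Real.exp (-(x - y) ^ 2 / (4 * t)) - Real.exp (-(x + y) ^ 2 / (4 * t)))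

/-- Exponentially weighted kernel `G_r(t,x,y) = e^{-r(x-y)} G(t,x,y)`. -/
noncomputable def Gr (r t x y : ℝ) : ℝ := Real.exp (-r * (x - y)) * G t x y

/-- Weighted sup norm `‖v‖_{L_r} = sup_{x ≥ 0} e^{-rx}|v(x)|`. -/
noncomputable def LrNorm (r : ℝ) (v : ℝ → ℝ) : ℝ :=
  sSup ((fun x => Real.exp (-r * x) * |v x|) '' Ici 0)

/-- Weighted sup norm `‖u‖_{C_r^T} = sup_{t ∈ [0,T]} sup_{x ≥ 0} e^{-rx}|u(t,x)|`. -/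
noncomputable def CrNorm (r T : ℝ) (u : ℝ → ℝ → ℝ) : ℝ :=
  sSup ((fun q : ℝ × ℝ => Real.exp (-r * q.2) * |u q.1 q.2|) '' (Icc 0 T ×ˢ Ici 0))

/-- `‖u‖_{C_r^T} < ∞`, expressed as boundedness of the weighted values. -/
def CrBdd (r T : ℝ) (u : ℝ → ℝ → ℝ) : Prop :=
  BddAbove ((fun q : ℝ × ℝ => Real.exp (-r * q.2) * |u q.1 q.2|) '' (Icc 0 T ×ˢ Ici 0))

/-- The heat kernel on the whole line. Since `√(4 * π * t) = 0` and `0⁻¹ = 0` for `t ≤ 0`, it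
vanishes at nonpositive times. -/
noncomputable def lineHeatKernel (t w : ℝ) : ℝ :=
  (√(4 * π * t))⁻¹ * exp (-w ^ 2 / (4 * t))

/-- The solution `∫_0^t ∫_0^∞ G(t-s,x,z) φ(s,z) dz ds` of the Dirichlet heat equation on the
half-line with source `φ` and zero initial value. -/
noncomputable def dirichletDuhamel (φ : ℝ → ℝ → ℝ) (t x : ℝ) : ℝ :=
  ∫ s in Ioc 0 t, ∫ z in Ioi 0, G (t - s) x z * φ s z

/-! ### Exponentially weighted Gaussian integrals -/

lemma exp_quadratic_eq {b : ℝ} (hb : b ≠ 0) (c x : ℝ) :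
    exp (-b * x ^ 2 + c * x) = exp (c ^ 2 / (4 * b)) * exp (-b * (x - c / (2 * b)) ^ 2) := by
  rw [← Real.exp_add]
  congr 1
  field_simp
  ring

lemma integrable_exp_quadratic {b : ℝ} (hb : 0 < b) (c : ℝ) :
    Integrable fun x : ℝ => exp (-b * x ^ 2 + c * x) := by
  simp only [exp_quadratic_eq hb.ne']
  exact ((integrable_exp_neg_mul_sq hb).comp_sub_right _).const_mul _

lemma integral_exp_quadratic {b : ℝ} (hb : 0 < b) (c : ℝ) :
    ∫ x : ℝ, exp (-b * x ^ 2 + c * x) = exp (c ^ 2 / (4 * b)) * √(π / b) := by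
  simp only [exp_quadratic_eq hb.ne', integral_const_mul]
  rw [integral_sub_right_eq_self (fun x => exp (-b * x ^ 2)), integral_gaussian]

lemma measurable_lineHeatKernel (t : ℝ) : Measurable (lineHeatKernel t) := by
  unfold lineHeatKernel
  fun_prop

section WeightedEnergy

variable {a c : ℝ} (κ : ℝ)

lemma exp_mul_lineHeatKernel_mul (ha : a ≠ 0) (hc : c ≠ 0) (w : ℝ) :
    exp (2 * κ * w) * (lineHeatKernel a w * lineHeatKernel c w) =
      (√(4 * π * a))⁻¹ * (√(4 * π * c))⁻¹ *
        exp (-((a + c) / (4 * (a * c))) * w ^ 2 + 2 * κ * w) := by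
  have hexp : -((a + c) / (4 * (a * c))) * w ^ 2 + 2 * κ * w =
      2 * κ * w + (-w ^ 2 / (4 * a) + -w ^ 2 / (4 * c)) := by
    field_simp
    ring
  rw [hexp, Real.exp_add, Real.exp_add]
  unfold lineHeatKernel
  ring

lemma integrable_exp_mul_lineHeatKernel_mul (ha : 0 < a) (hc : 0 < c) :
    Integrable fun w => exp (2 * κ * w) * (lineHeatKernel a w * lineHeatKernel c w) := by
  simp only [exp_mul_lineHeatKernel_mul κ ha.ne' hc.ne']
  exact (integrable_exp_quadratic (by positivity) _).const_mul _

lemma integral_exp_mul_lineHeatKernel_mul (ha : 0 < a) (hc : 0 < c) :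
    ∫ w, exp (2 * κ * w) * (lineHeatKernel a w * lineHeatKernel c w) =
      (√(4 * π * (a + c)))⁻¹ * exp (4 * κ ^ 2 * (a * c / (a + c))) := by
  have hexp : (2 * κ) ^ 2 / (4 * ((a + c) / (4 * (a * c)))) = 4 * κ ^ 2 * (a * c / (a + c)) := by
    field_simp
    ring
  have hsqrt : √(π / ((a + c) / (4 * (a * c)))) =
      √(4 * π * a) * √(4 * π * c) * (√(4 * π * (a + c)))⁻¹ := by
    rw [← Real.sqrt_mul (by positivity), ← Real.sqrt_inv, ← Real.sqrt_mul (by positivity)]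
    congr 1
    field_simp
  simp only [exp_mul_lineHeatKernel_mul κ ha.ne' hc.ne', integral_const_mul]
  rw [integral_exp_quadratic (by positivity), hexp, hsqrt]
  field_simp

lemma integral_exp_mul_lineHeatKernel_sq (ha : 0 < a) :
    ∫ w, exp (2 * κ * w) * lineHeatKernel a w ^ 2 =
      (√(8 * π))⁻¹ * ((√a)⁻¹ * exp (2 * κ ^ 2 * a)) := by
  have hexp : 4 * κ ^ 2 * (a * a / (a + a)) = 2 * κ ^ 2 * a := by
    field_simp
    ring
  simp only [sq (lineHeatKernel a _)]
  rw [integral_exp_mul_lineHeatKernel_mul κ ha ha, hexp, ← mul_assoc, ← mul_inv,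
    ← Real.sqrt_mul (by positivity)]
  ring_nf

lemma le_integral_exp_mul_lineHeatKernel_mul (ha : 0 < a) (hac : a ≤ c) :
    (√(8 * π))⁻¹ * ((√c)⁻¹ * exp (2 * κ ^ 2 * a)) ≤
      ∫ w, exp (2 * κ * w) * (lineHeatKernel a w * lineHeatKernel c w) := by
  have hc : 0 < c := ha.trans_le hac
  have hmean : a ≤ 2 * (a * c / (a + c)) := by
    rw [← mul_div_assoc, le_div_iff₀ (by positivity)]
    nlinarith
  have hsqrt : √(4 * π * (a + c)) ≤ √(8 * π * c) :=
    Real.sqrt_le_sqrt (by nlinarith [pi_pos])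
  have hexp : 2 * κ ^ 2 * a ≤ 4 * κ ^ 2 * (a * c / (a + c)) := by
    nlinarith [sq_nonneg κ]
  rw [integral_exp_mul_lineHeatKernel_mul κ ha hc, ← mul_assoc, ← mul_inv,
    ← Real.sqrt_mul (by positivity)]
  exact mul_le_mul (inv_anti₀ (by positivity) hsqrt) (exp_le_exp.2 hexp) (by positivity)
    (by positivity)

lemma exp_mul_lineHeatKernel_sub_sq (w : ℝ) :
    exp (2 * κ * w) * (lineHeatKernel a w - lineHeatKernel c w) ^ 2 =
      exp (2 * κ * w) * (lineHeatKernel a w * lineHeatKernel a w) -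
          2 * (exp (2 * κ * w) * (lineHeatKernel a w * lineHeatKernel c w)) +
        exp (2 * κ * w) * (lineHeatKernel c w * lineHeatKernel c w) := by
  ring

lemma integrable_exp_mul_lineHeatKernel_sub_sq (ha : 0 < a) (hc : 0 < c) :
    Integrable fun w => exp (2 * κ * w) * (lineHeatKernel a w - lineHeatKernel c w) ^ 2 := by
  simp only [exp_mul_lineHeatKernel_sub_sq]
  exact ((integrable_exp_mul_lineHeatKernel_mul κ ha ha).sub
    ((integrable_exp_mul_lineHeatKernel_mul κ ha hc).const_mul 2)).add
      (integrable_exp_mul_lineHeatKernel_mul κ hc hc)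

lemma integral_exp_mul_lineHeatKernel_sub_sq_le (ha : 0 < a) (hac : a ≤ c) :
    ∫ w, exp (2 * κ * w) * (lineHeatKernel a w - lineHeatKernel c w) ^ 2 ≤
      (√(8 * π))⁻¹ * (exp (2 * κ ^ 2 * a) * ((√a)⁻¹ - (√c)⁻¹) +
        (√c)⁻¹ * (exp (2 * κ ^ 2 * c) - exp (2 * κ ^ 2 * a))) := by
  have hc : 0 < c := ha.trans_le hac
  have haa := integrable_exp_mul_lineHeatKernel_mul κ ha ha
  have hcc := integrable_exp_mul_lineHeatKernel_mul κ hc hc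
  have hmixed := (integrable_exp_mul_lineHeatKernel_mul κ ha hc).const_mul 2
  simp only [exp_mul_lineHeatKernel_sub_sq]
  rw [integral_add ?_ hcc, integral_sub haa hmixed, integral_const_mul]
  · simp only [← sq (lineHeatKernel _ _), integral_exp_mul_lineHeatKernel_sq κ ha,
      integral_exp_mul_lineHeatKernel_sq κ hc]
    linarith [le_integral_exp_mul_lineHeatKernel_mul κ ha hac]
  · exact haa.sub hmixed

end WeightedEnergy

lemma exp_sub_exp_le (x y : ℝ) : exp y - exp x ≤ exp y * (y - x) := by
  have hx : exp x = exp y * exp (x - y) := by rw [← Real.exp_add]; ring_nf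
  rw [hx]
  nlinarith [Real.add_one_le_exp (x - y), Real.exp_pos y]

lemma inv_sqrt_mul_sub_le_sqrt {a c : ℝ} (ha : 0 ≤ a) (hac : a ≤ c) :
    (√c)⁻¹ * (c - a) ≤ √(c - a) := by
  refine inv_mul_le_of_le_mul₀ (Real.sqrt_nonneg c) (Real.sqrt_nonneg _) ?_
  calc c - a = √(c - a) * √(c - a) := (Real.mul_self_sqrt (sub_nonneg.2 hac)).symm
    _ ≤ √c * √(c - a) := by gcongr; exact sub_le_self c ha

lemma lintegral_exp_mul_lineHeatKernel_sub_sq_le (κ : ℝ) {a c T : ℝ} (ha : 0 < a) (hac : a ≤ c)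
    (hcT : c ≤ T) :
    ∫⁻ w, ENNReal.ofReal (exp (2 * κ * w) * (lineHeatKernel a w - lineHeatKernel c w) ^ 2) ≤
      ENNReal.ofReal ((√(8 * π))⁻¹ *
        (exp (2 * κ ^ 2 * T) * ((√a)⁻¹ - (√c)⁻¹ + 2 * κ ^ 2 * √(c - a)))) := by
  have hc : 0 < c := ha.trans_le hac
  have hinv : (√c)⁻¹ ≤ (√a)⁻¹ := inv_anti₀ (Real.sqrt_pos.2 ha) (Real.sqrt_le_sqrt hac)
  have hgrowth : (√c)⁻¹ * (exp (2 * κ ^ 2 * c) - exp (2 * κ ^ 2 * a)) ≤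
      exp (2 * κ ^ 2 * T) * (2 * κ ^ 2 * √(c - a)) :=
    calc (√c)⁻¹ * (exp (2 * κ ^ 2 * c) - exp (2 * κ ^ 2 * a))
        ≤ (√c)⁻¹ * (exp (2 * κ ^ 2 * c) * (2 * κ ^ 2 * c - 2 * κ ^ 2 * a)) := by
          gcongr
          exact exp_sub_exp_le _ _
      _ = exp (2 * κ ^ 2 * c) * (2 * κ ^ 2 * ((√c)⁻¹ * (c - a))) := by ring
      _ ≤ exp (2 * κ ^ 2 * T) * (2 * κ ^ 2 * √(c - a)) := by
          gcongr
          exact inv_sqrt_mul_sub_le_sqrt ha.le hac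
  rw [← ofReal_integral_eq_lintegral_ofReal (integrable_exp_mul_lineHeatKernel_sub_sq κ ha hc)
    (Eventually.of_forall fun w => by positivity)]
  refine ENNReal.ofReal_le_ofReal ((integral_exp_mul_lineHeatKernel_sub_sq_le κ ha hac).trans ?_)
  rw [mul_add (exp _)]
  gcongr
  exact hac.trans hcT

lemma lintegral_exp_mul_lineHeatKernel_sq_le (κ : ℝ) {t T : ℝ} (ht : 0 < t) (htT : t ≤ T) :
    ∫⁻ w, ENNReal.ofReal (exp (2 * κ * w) * lineHeatKernel t w ^ 2) ≤
      ENNReal.ofReal ((√(8 * π))⁻¹ * (exp (2 * κ ^ 2 * T) * (√t)⁻¹)) := by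
  have hint : Integrable fun w => exp (2 * κ * w) * lineHeatKernel t w ^ 2 := by
    simpa only [sq (lineHeatKernel t _)] using integrable_exp_mul_lineHeatKernel_mul κ ht ht
  rw [← ofReal_integral_eq_lintegral_ofReal hint (Eventually.of_forall fun w => by positivity),
    integral_exp_mul_lineHeatKernel_sq κ ht, mul_comm (√t)⁻¹]
  gcongr

/-! ### The Dirichlet kernel -/

lemma G_eq_lineHeatKernel_sub (t x y : ℝ) :
    G t x y = lineHeatKernel t (x - y) - lineHeatKernel t (x + y) := by
  unfold G lineHeatKernel
  ring

lemma measurable_Gr_sub (r t x : ℝ) : Measurable fun q : ℝ × ℝ => Gr r (t - q.1) x q.2 := by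
  unfold Gr G
  fun_prop

lemma sq_exp_mul_sub_reflection_le (k : ℝ → ℝ) (r : ℝ) {x z : ℝ} (hx : 0 ≤ x) (hz : 0 ≤ z) :
    (exp (-r * (x - z)) * (k (x - z) - k (x + z))) ^ 2 ≤
      2 * (exp (2 * -r * (x - z)) * k (x - z) ^ 2 + exp (2 * |r| * (x + z)) * k (x + z) ^ 2) := by
  have hweight : exp (2 * -r * (x - z)) ≤ exp (2 * |r| * (x + z)) := by
    have habs : |x - z| ≤ x + z := abs_sub_le_iff.2 ⟨by linarith, by linarith⟩
    have hr : -r * (x - z) ≤ |r| * |x - z| := by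
      rw [← abs_neg r, ← abs_mul]
      exact le_abs_self _
    exact exp_le_exp.2 (by nlinarith [abs_nonneg r])
  calc (exp (-r * (x - z)) * (k (x - z) - k (x + z))) ^ 2
      = exp (2 * -r * (x - z)) * (k (x - z) - k (x + z)) ^ 2 := by
        rw [mul_pow, ← Real.exp_nat_mul]
        push_cast
        ring_nf
    _ ≤ exp (2 * -r * (x - z)) * (2 * (k (x - z) ^ 2 + k (x + z) ^ 2)) := by
        gcongr
        nlinarith [sq_nonneg (k (x - z) + k (x + z))]
    _ = 2 * (exp (2 * -r * (x - z)) * k (x - z) ^ 2 +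
          exp (2 * -r * (x - z)) * k (x + z) ^ 2) := by ring
    _ ≤ _ := by gcongr

lemma lintegral_sq_exp_mul_sub_reflection_le {k : ℝ → ℝ} (hk : Measurable k) (r : ℝ) {x : ℝ}
    (hx : 0 ≤ x) :
    ∫⁻ z in Ioi 0, ENNReal.ofReal ((exp (-r * (x - z)) * (k (x - z) - k (x + z))) ^ 2) ≤
      2 * ((∫⁻ w, ENNReal.ofReal (exp (2 * -r * w) * k w ^ 2)) +
        ∫⁻ w, ENNReal.ofReal (exp (2 * |r| * w) * k w ^ 2)) := by
  set e : ℝ → ℝ → ENNReal := fun κ w => ENNReal.ofReal (exp (2 * κ * w) * k w ^ 2)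
  have hmeas (κ : ℝ) : Measurable (e κ) := by fun_prop
  calc ∫⁻ z in Ioi 0, ENNReal.ofReal ((exp (-r * (x - z)) * (k (x - z) - k (x + z))) ^ 2)
      ≤ ∫⁻ z in Ioi 0, 2 * (e (-r) (x - z) + e |r| (x + z)) := by
        refine setLIntegral_mono' measurableSet_Ioi fun z hz => ?_
        refine (ENNReal.ofReal_le_ofReal (sq_exp_mul_sub_reflection_le k r hx hz.le)).trans_eq ?_
        rw [ENNReal.ofReal_mul zero_le_two, ENNReal.ofReal_add (by positivity) (by positivity),
          ENNReal.ofReal_ofNat]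
    _ ≤ ∫⁻ z, 2 * (e (-r) (x - z) + e |r| (x + z)) := setLIntegral_le_lintegral _ _
    _ = 2 * ((∫⁻ w, e (-r) w) + ∫⁻ w, e |r| w) := by
        rw [lintegral_const_mul _ (by fun_prop), lintegral_add_left (by fun_prop),
          lintegral_sub_left_eq_self (e (-r)), lintegral_add_left_eq_self (e |r|)]

lemma four_mul_inv_sqrt_eight_pi_le_one : 4 * (√(8 * π))⁻¹ ≤ 1 := by
  have h : 4 ≤ √(8 * π) := Real.le_sqrt_of_sq_le (by linarith [pi_gt_three])
  rw [← div_eq_mul_inv]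
  exact div_le_one_of_le₀ h (Real.sqrt_nonneg _)

/- Both exponential weights `κ = -r` and `κ = |r|` of the method of images satisfy `κ² = r²`. -/
lemma lintegral_sq_exp_mul_sub_reflection_le_of_forall {k : ℝ → ℝ} (hk : Measurable k) {r x B : ℝ}
    (hx : 0 ≤ x) (hB : 0 ≤ B)
    (hkB : ∀ κ, κ ^ 2 = r ^ 2 → ∫⁻ w, ENNReal.ofReal (exp (2 * κ * w) * k w ^ 2) ≤
      ENNReal.ofReal ((√(8 * π))⁻¹ * B)) :
    ∫⁻ z in Ioi 0, ENNReal.ofReal ((exp (-r * (x - z)) * (k (x - z) - k (x + z))) ^ 2) ≤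
      ENNReal.ofReal B := by
  refine (lintegral_sq_exp_mul_sub_reflection_le hk r hx).trans ?_
  calc _ ≤ 2 * (ENNReal.ofReal ((√(8 * π))⁻¹ * B) + ENNReal.ofReal ((√(8 * π))⁻¹ * B)) := by
        gcongr
        · exact hkB (-r) (neg_sq r)
        · exact hkB |r| (sq_abs r)
    _ = ENNReal.ofReal (4 * (√(8 * π))⁻¹ * B) := by
        rw [← ENNReal.ofReal_add (by positivity) (by positivity), ← ENNReal.ofReal_ofNat 2,
          ← ENNReal.ofReal_mul zero_le_two]
        ring_nf
    _ ≤ ENNReal.ofReal B :=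
        ENNReal.ofReal_le_ofReal (mul_le_of_le_one_left hB four_mul_inv_sqrt_eight_pi_le_one)

lemma lintegral_Gr_sub_sq_le {r a c T x : ℝ} (ha : 0 < a) (hac : a ≤ c) (hcT : c ≤ T)
    (hx : 0 ≤ x) :
    ∫⁻ z in Ioi 0, ENNReal.ofReal ((Gr r a x z - Gr r c x z) ^ 2) ≤
      ENNReal.ofReal
        (exp (2 * r ^ 2 * T) * ((√a)⁻¹ - (√c)⁻¹ + 2 * r ^ 2 * √(c - a))) := by
  have hinv : (√c)⁻¹ ≤ (√a)⁻¹ := inv_anti₀ (Real.sqrt_pos.2 ha) (Real.sqrt_le_sqrt hac)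
  have hGr (z : ℝ) : Gr r a x z - Gr r c x z = exp (-r * (x - z)) *
      ((lineHeatKernel a (x - z) - lineHeatKernel c (x - z)) -
        (lineHeatKernel a (x + z) - lineHeatKernel c (x + z))) := by
    unfold Gr
    rw [G_eq_lineHeatKernel_sub, G_eq_lineHeatKernel_sub]
    ring
  simp only [hGr]
  exact lintegral_sq_exp_mul_sub_reflection_le_of_forall
    (k := fun w => lineHeatKernel a w - lineHeatKernel c w)
    ((measurable_lineHeatKernel a).sub (measurable_lineHeatKernel c)) hx (by positivity)
    fun κ hκ => hκ ▸ lintegral_exp_mul_lineHeatKernel_sub_sq_le κ ha hac hcT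

lemma lintegral_Gr_sq_le {r t T x : ℝ} (ht : 0 < t) (htT : t ≤ T) (hx : 0 ≤ x) :
    ∫⁻ z in Ioi 0, ENNReal.ofReal (Gr r t x z ^ 2) ≤
      ENNReal.ofReal (exp (2 * r ^ 2 * T) * (√t)⁻¹) := by
  simp only [Gr, G_eq_lineHeatKernel_sub]
  exact lintegral_sq_exp_mul_sub_reflection_le_of_forall (measurable_lineHeatKernel t) hx
    (by positivity) fun κ hκ => hκ ▸ lintegral_exp_mul_lineHeatKernel_sq_le κ ht htT

/-! ### Integration in time -/

lemma inv_sqrt_eq_rpow (v : ℝ) : (√v)⁻¹ = v ^ (-(1 / 2) : ℝ) := by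
  rcases le_or_gt 0 v with hv | hv
  · rw [Real.rpow_neg hv, Real.sqrt_eq_rpow]
  · have hcos : cos (-(1 / 2) * π) = 0 := by
      rw [neg_mul, cos_neg, one_div_mul_eq_div, cos_pi_div_two]
    rw [Real.sqrt_eq_zero_of_nonpos hv.le, Real.rpow_def_of_neg hv, hcos, inv_zero, mul_zero]

lemma intervalIntegrable_inv_sqrt_sub (t a b : ℝ) :
    IntervalIntegrable (fun v => (√(t - v))⁻¹) volume a b := by
  simp only [inv_sqrt_eq_rpow]
  simpa using (intervalIntegral.intervalIntegrable_rpow' (a := t - a) (b := t - b)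
    (by norm_num : -1 < (-(1 / 2) : ℝ))).comp_sub_left t

lemma integral_inv_sqrt_sub (t a b : ℝ) :
    ∫ v in a..b, (√(t - v))⁻¹ = 2 * (√(t - a) - √(t - b)) := by
  simp only [inv_sqrt_eq_rpow]
  rw [intervalIntegral.integral_comp_sub_left (fun v => v ^ (-(1 / 2) : ℝ)) t,
    integral_rpow (Or.inl (by norm_num)), Real.sqrt_eq_rpow, Real.sqrt_eq_rpow]
  norm_num
  ring

lemma lintegral_Ioc_prod_le_ofReal_integral {f : ℝ × ℝ → ENNReal} (hf : Measurable f) {S : Set ℝ}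
    {β : ℝ → ℝ} {a b : ℝ} (hab : a ≤ b) (hβ : IntervalIntegrable β volume a b)
    (hβ_nonneg : ∀ v ∈ Ioo a b, 0 ≤ β v)
    (hle : ∀ v ∈ Ioo a b, ∫⁻ z in S, f (v, z) ≤ ENNReal.ofReal (β v)) :
    ∫⁻ q in Ioc a b ×ˢ S, f q ≤ ENNReal.ofReal (∫ v in a..b, β v) := by
  rw [Measure.volume_eq_prod, ← Measure.prod_restrict, lintegral_prod _ hf.aemeasurable,
    intervalIntegral.integral_of_le hab, ← restrict_Ioo_eq_restrict_Ioc,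
    ofReal_integral_eq_lintegral_ofReal (hβ.1.mono_set Ioo_subset_Ioc_self)
      ((ae_restrict_iff' measurableSet_Ioo).2 (Eventually.of_forall hβ_nonneg))]
  exact setLIntegral_mono' measurableSet_Ioo hle

/-- The squared `L²` norm in space-time of an increment of `Gr` over a time step `d` is at most
`kernelConst r T * √d`; see `lintegral_prod_Gr_sub_sq_le` and `lintegral_prod_Gr_sq_le`. -/
noncomputable def kernelConst (r T : ℝ) : ℝ := 2 * exp (2 * r ^ 2 * T) * (1 + r ^ 2 * T)

section SpaceTime

variable {r s t T x : ℝ}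

lemma kernelConst_pos (hT : 0 ≤ T) : 0 < kernelConst r T := by
  unfold kernelConst
  positivity

lemma lintegral_prod_Gr_sub_sq_le (hs : 0 ≤ s) (hst : s ≤ t) (htT : t ≤ T) (hx : 0 ≤ x) :
    ∫⁻ q in Ioc 0 s ×ˢ Ioi 0,
        ENNReal.ofReal ((Gr r (s - q.1) x q.2 - Gr r (t - q.1) x q.2) ^ 2) ≤
      ENNReal.ofReal (kernelConst r T * √(t - s)) := by
  set β : ℝ → ℝ := fun v =>
    exp (2 * r ^ 2 * T) * ((√(s - v))⁻¹ - (√(t - v))⁻¹ + 2 * r ^ 2 * √(t - s)) with hβ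
  have hβ_int : IntervalIntegrable β volume 0 s :=
    (((intervalIntegrable_inv_sqrt_sub s 0 s).sub (intervalIntegrable_inv_sqrt_sub t 0 s)).add
      intervalIntegrable_const).const_mul _
  have hβ_nonneg : ∀ v ∈ Ioo 0 s, 0 ≤ β v := fun v hv => by
    have hinv : (√(t - v))⁻¹ ≤ (√(s - v))⁻¹ :=
      inv_anti₀ (Real.sqrt_pos.2 (sub_pos.2 hv.2)) (Real.sqrt_le_sqrt (by linarith))
    positivity
  refine (lintegral_Ioc_prod_le_ofReal_integral
    (((measurable_Gr_sub r s x).fun_sub (measurable_Gr_sub r t x)).pow_const 2).ennreal_ofReal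
    hs hβ_int hβ_nonneg fun v hv => ?_).trans (ENNReal.ofReal_le_ofReal ?_)
  · have htv : t - v ≤ T := by linarith [hv.1]
    simpa only [sub_sub_sub_cancel_right] using
      lintegral_Gr_sub_sq_le (r := r) (sub_pos.2 hv.2) (sub_le_sub_right hst v) htv hx
  · have hint : ∫ v in 0..s, β v = exp (2 * r ^ 2 * T) *
        (2 * √s - 2 * (√t - √(t - s)) + s * (2 * r ^ 2 * √(t - s))) := by
      rw [hβ, intervalIntegral.integral_const_mul, intervalIntegral.integral_add
        ((intervalIntegrable_inv_sqrt_sub s 0 s).sub (intervalIntegrable_inv_sqrt_sub t 0 s))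
        intervalIntegrable_const, intervalIntegral.integral_sub
        (intervalIntegrable_inv_sqrt_sub s 0 s) (intervalIntegrable_inv_sqrt_sub t 0 s),
        integral_inv_sqrt_sub, integral_inv_sqrt_sub, intervalIntegral.integral_const]
      simp
    calc ∫ v in 0..s, β v
        ≤ exp (2 * r ^ 2 * T) * (2 * √(t - s) + T * (2 * r ^ 2 * √(t - s))) := by
          rw [hint]
          gcongr
          · linarith [Real.sqrt_le_sqrt hst]
          · exact hst.trans htT
      _ = kernelConst r T * √(t - s) := by unfold kernelConst; ring

lemma lintegral_prod_Gr_sq_le (hs : 0 ≤ s) (hst : s ≤ t) (htT : t ≤ T) (hx : 0 ≤ x) :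
    ∫⁻ q in Ioc s t ×ˢ Ioi 0, ENNReal.ofReal (Gr r (t - q.1) x q.2 ^ 2) ≤
      ENNReal.ofReal (kernelConst r T * √(t - s)) := by
  have hT : 0 ≤ T := hs.trans (hst.trans htT)
  refine (lintegral_Ioc_prod_le_ofReal_integral
    (β := fun v => exp (2 * r ^ 2 * T) * (√(t - v))⁻¹)
    ((measurable_Gr_sub r t x).pow_const 2).ennreal_ofReal hst
    ((intervalIntegrable_inv_sqrt_sub t s t).const_mul _) (fun v _ => by positivity)
    fun v hv => lintegral_Gr_sq_le (sub_pos.2 hv.2) (by linarith [hv.1]) hx).trans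
    (ENNReal.ofReal_le_ofReal ?_)
  calc ∫ v in s..t, exp (2 * r ^ 2 * T) * (√(t - v))⁻¹
      = 2 * exp (2 * r ^ 2 * T) * 1 * √(t - s) := by
        rw [intervalIntegral.integral_const_mul, integral_inv_sqrt_sub, sub_self, Real.sqrt_zero]
        ring
    _ ≤ kernelConst r T * √(t - s) := by
        unfold kernelConst
        gcongr
        exact le_add_of_nonneg_right (by positivity)

end SpaceTime

/-! ### Hölder continuity of Duhamel integrals -/

section CauchySchwarz

variable {α : Type*} [MeasurableSpace α] {μ : Measure α} {f g : α → ℝ}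

lemma abs_integral_mul_le_sqrt_mul_sqrt (hf : MemLp f 2 μ) (hg : MemLp g 2 μ) :
    |∫ a, f a * g a ∂μ| ≤ √(∫ a, f a ^ 2 ∂μ) * √(∫ a, g a ^ 2 ∂μ) := by
  have hHölder := integral_mul_norm_le_Lp_mul_Lq (μ := μ) (f := f) (g := g)
    Real.HolderConjugate.two_two (by simpa using hf) (by simpa using hg)
  simp only [Real.norm_eq_abs, Real.rpow_two, sq_abs, ← Real.sqrt_eq_rpow] at hHölder
  calc |∫ a, f a * g a ∂μ| ≤ ∫ a, |f a * g a| ∂μ := abs_integral_le_integral_abs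
    _ = ∫ a, |f a| * |g a| ∂μ := by simp only [abs_mul]
    _ ≤ _ := hHölder

lemma memLp_two_of_lintegral_sq_le {A : ℝ} (hf : AEStronglyMeasurable f μ)
    (hA : ∫⁻ a, ENNReal.ofReal (f a ^ 2) ∂μ ≤ ENNReal.ofReal A) : MemLp f 2 μ := by
  refine (memLp_two_iff_integrable_sq hf).2 ⟨hf.pow 2, ?_⟩
  rw [hasFiniteIntegral_iff_ofReal (Eventually.of_forall fun a => sq_nonneg (f a))]
  exact hA.trans_lt ENNReal.ofReal_lt_top

lemma abs_integral_mul_le_of_lintegral_sq_le {A : ℝ} (hf : AEStronglyMeasurable f μ)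
    (hA : ∫⁻ a, ENNReal.ofReal (f a ^ 2) ∂μ ≤ ENNReal.ofReal A) (hA_nonneg : 0 ≤ A)
    (hg : MemLp g 2 μ) :
    |∫ a, f a * g a ∂μ| ≤ √A * √(∫ a, g a ^ 2 ∂μ) := by
  refine (abs_integral_mul_le_sqrt_mul_sqrt (memLp_two_of_lintegral_sq_le hf hA) hg).trans ?_
  gcongr
  rw [integral_eq_lintegral_of_nonneg_ae (Eventually.of_forall fun a => sq_nonneg (f a))
    (hf.pow 2)]
  exact ENNReal.toReal_le_of_le_ofReal hA_nonneg hA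

lemma abs_setIntegral_mul_le_of_lintegral_sq_le {A : ℝ} {S S' : Set α} (hS : S ⊆ S')
    (hf : AEStronglyMeasurable f (μ.restrict S))
    (hA : ∫⁻ a in S, ENNReal.ofReal (f a ^ 2) ∂μ ≤ ENNReal.ofReal A) (hA_nonneg : 0 ≤ A)
    (hg : MemLp g 2 (μ.restrict S')) :
    |∫ a in S, f a * g a ∂μ| ≤ √A * √(∫ a in S', g a ^ 2 ∂μ) := by
  refine (abs_integral_mul_le_of_lintegral_sq_le hf hA hA_nonneg
    (hg.mono_measure (Measure.restrict_mono_set μ hS))).trans ?_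
  exact mul_le_mul_of_nonneg_left (Real.sqrt_le_sqrt (setIntegral_mono_set hg.integrable_sq
    (Eventually.of_forall fun a => sq_nonneg (g a)) hS.eventuallyLE)) (Real.sqrt_nonneg A)

lemma sqrt_integral_sq_le_of_ae_abs_le {B : ℝ} (hB : 0 ≤ B) (hf : MemLp f 2 μ) (hg : MemLp g 2 μ)
    (hfg : ∀ᵐ a ∂μ, |f a| ≤ B * |g a|) :
    √(∫ a, f a ^ 2 ∂μ) ≤ B * √(∫ a, g a ^ 2 ∂μ) := by
  rw [Real.sqrt_le_left (by positivity), mul_pow,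
    Real.sq_sqrt (integral_nonneg fun a => sq_nonneg (g a)), ← integral_const_mul]
  refine integral_mono_ae hf.integrable_sq (hg.integrable_sq.const_mul _) ?_
  filter_upwards [hfg] with a ha
  rw [← sq_abs (f a), ← sq_abs (g a), ← mul_pow]
  exact pow_le_pow_left₀ (abs_nonneg _) ha 2

end CauchySchwarz

section Duhamel

variable {r s t T x : ℝ} {φ : ℝ → ℝ → ℝ}

lemma memLp_Gr_sub (ht : 0 ≤ t) (hx : 0 ≤ x) :
    MemLp (fun q : ℝ × ℝ => Gr r (t - q.1) x q.2) 2 (volume.restrict (Ioc 0 t ×ˢ Ioi 0)) :=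
  memLp_two_of_lintegral_sq_le (measurable_Gr_sub r t x).aestronglyMeasurable
    (lintegral_prod_Gr_sq_le le_rfl ht le_rfl hx)

lemma exp_mul_dirichletDuhamel
    (hint : IntegrableOn (fun q : ℝ × ℝ => Gr r (t - q.1) x q.2 * (exp (-r * q.2) * φ q.1 q.2))
      (Ioc 0 t ×ˢ Ioi 0)) :
    exp (-r * x) * dirichletDuhamel φ t x =
      ∫ q in Ioc 0 t ×ˢ Ioi 0, Gr r (t - q.1) x q.2 * (exp (-r * q.2) * φ q.1 q.2) := by
  have hweight (v z : ℝ) : Gr r (t - v) x z * (exp (-r * z) * φ v z) =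
      exp (-r * x) * (G (t - v) x z * φ v z) := by
    have hexp : exp (-r * x) = exp (-r * (x - z)) * exp (-r * z) := by
      rw [← Real.exp_add]
      ring_nf
    rw [hexp, Gr]
    ring
  rw [IntegrableOn, Measure.volume_eq_prod, ← Measure.prod_restrict] at hint
  rw [Measure.volume_eq_prod, ← Measure.prod_restrict, integral_prod _ hint]
  simp only [hweight, integral_const_mul, dirichletDuhamel]

lemma integrableOn_Gr_mul (ht : 0 ≤ t) (hx : 0 ≤ x)
    (hφ : MemLp (fun q : ℝ × ℝ => exp (-r * q.2) * φ q.1 q.2) 2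
      (volume.restrict (Ioc 0 t ×ˢ Ioi 0))) :
    IntegrableOn (fun q : ℝ × ℝ => Gr r (t - q.1) x q.2 * (exp (-r * q.2) * φ q.1 q.2))
      (Ioc 0 t ×ˢ Ioi 0) :=
  (memLp_Gr_sub ht hx).integrable_mul hφ

lemma exp_mul_dirichletDuhamel_sub (hs : 0 ≤ s) (hst : s ≤ t) (hx : 0 ≤ x)
    (hφ : MemLp (fun q : ℝ × ℝ => exp (-r * q.2) * φ q.1 q.2) 2
      (volume.restrict (Ioc 0 t ×ˢ Ioi 0))) :
    exp (-r * x) * dirichletDuhamel φ s x - exp (-r * x) * dirichletDuhamel φ t x =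
      (∫ q in Ioc 0 s ×ˢ Ioi 0, (Gr r (s - q.1) x q.2 - Gr r (t - q.1) x q.2) *
          (exp (-r * q.2) * φ q.1 q.2)) -
        ∫ q in Ioc s t ×ˢ Ioi 0, Gr r (t - q.1) x q.2 * (exp (-r * q.2) * φ q.1 q.2) := by
  have hearly : Ioc 0 s ×ˢ Ioi (0 : ℝ) ⊆ Ioc 0 t ×ˢ Ioi 0 :=
    prod_mono_left (Ioc_subset_Ioc_right hst)
  have hlate : Ioc s t ×ˢ Ioi (0 : ℝ) ⊆ Ioc 0 t ×ˢ Ioi 0 :=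
    prod_mono_left (Ioc_subset_Ioc_left hs)
  have hdisj : Disjoint (Ioc 0 s ×ˢ Ioi (0 : ℝ)) (Ioc s t ×ˢ Ioi 0) :=
    Disjoint.set_prod_left (Ioc_disjoint_Ioc_of_le le_rfl) _ _
  have hs_int := integrableOn_Gr_mul hs hx
    (hφ.mono_measure (Measure.restrict_mono_set volume hearly))
  have ht_int := integrableOn_Gr_mul (hs.trans hst) hx hφ
  simp only [sub_mul]
  rw [exp_mul_dirichletDuhamel hs_int, exp_mul_dirichletDuhamel ht_int,
    integral_sub hs_int (ht_int.mono_set hearly), ← Ioc_union_Ioc_eq_Ioc hs hst, union_prod,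
    setIntegral_union hdisj (measurableSet_Ioc.prod measurableSet_Ioi) (ht_int.mono_set hearly)
      (ht_int.mono_set hlate)]
  ring

lemma abs_exp_mul_dirichletDuhamel_sub_le_of_le (hs : 0 ≤ s) (hst : s ≤ t) (htT : t ≤ T)
    (hx : 0 ≤ x)
    (hφ : MemLp (fun q : ℝ × ℝ => exp (-r * q.2) * φ q.1 q.2) 2
      (volume.restrict (Ioc 0 T ×ˢ Ioi 0))) :
    |exp (-r * x) * dirichletDuhamel φ s x - exp (-r * x) * dirichletDuhamel φ t x| ≤
      2 * √(kernelConst r T * √(t - s)) *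
        √(∫ q in Ioc 0 T ×ˢ Ioi 0, (exp (-r * q.2) * φ q.1 q.2) ^ 2) := by
  have hA : 0 ≤ kernelConst r T * √(t - s) :=
    mul_nonneg (kernelConst_pos (hs.trans (hst.trans htT))).le (Real.sqrt_nonneg _)
  have hearly : Ioc 0 s ×ˢ Ioi (0 : ℝ) ⊆ Ioc 0 T ×ˢ Ioi 0 :=
    prod_mono_left (Ioc_subset_Ioc_right (hst.trans htT))
  have hlate : Ioc s t ×ˢ Ioi (0 : ℝ) ⊆ Ioc 0 T ×ˢ Ioi 0 := prod_mono_left (Ioc_subset_Ioc hs htT)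
  have htotal : Ioc 0 t ×ˢ Ioi (0 : ℝ) ⊆ Ioc 0 T ×ˢ Ioi 0 :=
    prod_mono_left (Ioc_subset_Ioc_right htT)
  have hearly_le := abs_setIntegral_mul_le_of_lintegral_sq_le hearly
    ((measurable_Gr_sub r s x).sub (measurable_Gr_sub r t x)).aestronglyMeasurable
    (lintegral_prod_Gr_sub_sq_le hs hst htT hx) hA hφ
  have hlate_le := abs_setIntegral_mul_le_of_lintegral_sq_le hlate
    (measurable_Gr_sub r t x).aestronglyMeasurable (lintegral_prod_Gr_sq_le hs hst htT hx) hA hφ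
  rw [exp_mul_dirichletDuhamel_sub hs hst hx
    (hφ.mono_measure (Measure.restrict_mono_set volume htotal))]
  refine (abs_sub _ _).trans ((add_le_add hearly_le hlate_le).trans_eq ?_)
  ring

lemma abs_exp_mul_dirichletDuhamel_sub_le (hs : s ∈ Icc 0 T) (ht : t ∈ Icc 0 T) (hx : 0 ≤ x)
    (hφ : MemLp (fun q : ℝ × ℝ => exp (-r * q.2) * φ q.1 q.2) 2
      (volume.restrict (Ioc 0 T ×ˢ Ioi 0))) :
    |exp (-r * x) * dirichletDuhamel φ s x - exp (-r * x) * dirichletDuhamel φ t x| ≤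
      2 * √(kernelConst r T) * √(∫ q in Ioc 0 T ×ˢ Ioi 0, (exp (-r * q.2) * φ q.1 q.2) ^ 2) *
        |s - t| ^ (1 / 4 : ℝ) := by
  wlog hst : s ≤ t generalizing s t
  · rw [abs_sub_comm, abs_sub_comm s]
    exact this ht hs (le_of_not_ge hst)
  have hroot : √(√(t - s)) = |s - t| ^ (1 / 4 : ℝ) := by
    rw [abs_sub_comm, abs_of_nonneg (sub_nonneg.2 hst), Real.sqrt_eq_rpow, Real.sqrt_eq_rpow,
      ← Real.rpow_mul (sub_nonneg.2 hst)]
    norm_num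
  refine (abs_exp_mul_dirichletDuhamel_sub_le_of_le hs.1 hst ht.2 hx hφ).trans_eq ?_
  rw [Real.sqrt_mul (kernelConst_pos (hs.1.trans hs.2)).le, hroot]
  ring

end Duhamel

/-! ### Forcing terms of linear growth -/

section Forcing

variable {r R T t z : ℝ} {σ u h : ℝ → ℝ → ℝ}

lemma CrNorm_nonneg (r T : ℝ) (u : ℝ → ℝ → ℝ) : 0 ≤ CrNorm r T u := by
  refine Real.sSup_nonneg ?_
  rintro _ ⟨q, -, rfl⟩
  positivity

lemma CrBdd.exp_mul_abs_le_CrNorm (hu : CrBdd r T u) (ht : t ∈ Icc 0 T) (hz : 0 ≤ z) :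
    exp (-r * z) * |u t z| ≤ CrNorm r T u :=
  le_csSup hu ⟨(t, z), ⟨ht, hz⟩, rfl⟩

lemma nonneg_of_growth (hσ : ∀ x ≥ (0 : ℝ), ∀ v : ℝ, |σ x v| ≤ R * (exp (r * x) + |v|)) :
    0 ≤ R := by
  simpa using (abs_nonneg _).trans (hσ 0 le_rfl 0)

lemma exp_mul_abs_le_of_growth
    (hσ : ∀ x ≥ (0 : ℝ), ∀ v : ℝ, |σ x v| ≤ R * (exp (r * x) + |v|)) (hu : CrBdd r T u)
    (ht : t ∈ Icc 0 T) (hz : 0 ≤ z) :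
    exp (-r * z) * |σ z (u t z)| ≤ R * (1 + CrNorm r T u) := by
  have hR := nonneg_of_growth hσ
  calc exp (-r * z) * |σ z (u t z)|
      ≤ exp (-r * z) * (R * (exp (r * z) + |u t z|)) := by
        gcongr
        exact hσ z hz _
    _ = R * (exp (-r * z) * exp (r * z) + exp (-r * z) * |u t z|) := by ring
    _ = R * (1 + exp (-r * z) * |u t z|) := by rw [← Real.exp_add]; simp
    _ ≤ R * (1 + CrNorm r T u) := by
        gcongr
        exact hu.exp_mul_abs_le_CrNorm ht hz

lemma ae_abs_exp_mul_forcing_le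
    (hσ : ∀ x ≥ (0 : ℝ), ∀ v : ℝ, |σ x v| ≤ R * (exp (r * x) + |v|)) (hu : CrBdd r T u)
    (h : ℝ → ℝ → ℝ) :
    ∀ᵐ q : ℝ × ℝ ∂volume.restrict (Ioc 0 T ×ˢ Ioi 0),
      |exp (-r * q.2) * (σ q.2 (u q.1 q.2) * h q.1 q.2)| ≤
        R * (1 + CrNorm r T u) * |Function.uncurry h q| := by
  refine ae_restrict_of_forall_mem (measurableSet_Ioc.prod measurableSet_Ioi) fun q hq => ?_
  rw [abs_mul, abs_mul, Real.abs_exp, ← mul_assoc]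
  exact mul_le_mul_of_nonneg_right
    (exp_mul_abs_le_of_growth hσ hu (Ioc_subset_Icc_self hq.1) (le_of_lt hq.2)) (abs_nonneg _)

lemma memLp_exp_mul_forcing (hσ_meas : Measurable (Function.uncurry σ))
    (hσ : ∀ x ≥ (0 : ℝ), ∀ v : ℝ, |σ x v| ≤ R * (exp (r * x) + |v|))
    (hu_meas : AEMeasurable (Function.uncurry u) (volume.restrict (Ioc 0 T ×ˢ Ioi 0)))
    (hu : CrBdd r T u)
    (hh : MemLp (Function.uncurry h) 2 (volume.restrict (Ioc 0 T ×ˢ Ioi 0))) :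
    MemLp (fun q : ℝ × ℝ => exp (-r * q.2) * (σ q.2 (u q.1 q.2) * h q.1 q.2)) 2
      (volume.restrict (Ioc 0 T ×ˢ Ioi 0)) := by
  have hσu : AEMeasurable (fun q : ℝ × ℝ => σ q.2 (u q.1 q.2))
      (volume.restrict (Ioc 0 T ×ˢ Ioi 0)) :=
    hσ_meas.comp_aemeasurable (measurable_snd.aemeasurable.prodMk hu_meas)
  have hweight : Measurable fun q : ℝ × ℝ => exp (-r * q.2) := by fun_prop
  exact hh.of_le_mul
    (hweight.aestronglyMeasurable.mul (hσu.aestronglyMeasurable.mul hh.aestronglyMeasurable))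
    (ae_abs_exp_mul_forcing_le hσ hu h)

end Forcing

lemma rpow_le_of_le_mul_rpow_one_fourth {D A d T p : ℝ} (hD : 0 ≤ D) (hA : 0 ≤ A) (hd : 0 ≤ d)
    (hdT : d ≤ T) (hp : 4 ≤ p) (h : D ≤ A * d ^ (1 / 4 : ℝ)) :
    D ^ p ≤ A ^ p * T * d ^ ((p - 4) / 4) :=
  calc D ^ p ≤ (A * d ^ (1 / 4 : ℝ)) ^ p := by gcongr
    _ = A ^ p * d ^ (1 + (p - 4) / 4) := by
        rw [Real.mul_rpow hA (by positivity), ← Real.rpow_mul hd]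
        ring_nf
    _ = A ^ p * (d * d ^ ((p - 4) / 4)) := by
        rw [Real.rpow_add_of_nonneg hd zero_le_one (by linarith), Real.rpow_one]
    _ ≤ A ^ p * (T * d ^ ((p - 4) / 4)) := by gcongr
    _ = A ^ p * T * d ^ ((p - 4) / 4) := by ring

theorem stmt_15_general (r : ℝ) {T : ℝ} (hT : 0 ≤ T) :
    ∃ C > (0 : ℝ), ∀ R N : ℝ, 0 ≤ N →
      ∀ σ : ℝ → ℝ → ℝ,
        Measurable (Function.uncurry σ) →
        (∀ x ≥ (0 : ℝ), ∀ u : ℝ, |σ x u| ≤ R * (exp (r * x) + |u|)) →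
      ∀ u : ℝ → ℝ → ℝ,
        AEMeasurable (Function.uncurry u) (volume.restrict (Ioc 0 T ×ˢ Ioi 0)) → CrBdd r T u →
      ∀ h : ℝ → ℝ → ℝ,
        MemLp (Function.uncurry h) 2 (volume.restrict (Ioc 0 T ×ˢ Ioi 0)) →
        (∫ q in Ioc (0 : ℝ) T ×ˢ Ioi (0 : ℝ), h q.1 q.2 ^ 2) ≤ N ^ 2 →
      ∀ s ∈ Icc (0 : ℝ) T, ∀ t ∈ Icc (0 : ℝ) T, ∀ x ≥ (0 : ℝ),
        |exp (-r * x) * dirichletDuhamel (fun v z => σ z (u v z) * h v z) s x -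
            exp (-r * x) * dirichletDuhamel (fun v z => σ z (u v z) * h v z) t x| ≤
          C * R * N * (1 + CrNorm r T u) * |s - t| ^ (1 / 4 : ℝ) := by
  have hK : 0 < kernelConst r T := kernelConst_pos hT
  refine ⟨2 * √(kernelConst r T), by positivity, fun R N hN σ hσ_meas hσ u hu_meas hu h hh hhN
    s hs t ht x hx => ?_⟩
  have hB : 0 ≤ R * (1 + CrNorm r T u) :=
    mul_nonneg (nonneg_of_growth hσ) (by linarith [CrNorm_nonneg r T u])
  have hφ := memLp_exp_mul_forcing hσ_meas hσ hu_meas hu hh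
  have hφ_norm : √(∫ q in Ioc 0 T ×ˢ Ioi 0,
      (exp (-r * q.2) * (σ q.2 (u q.1 q.2) * h q.1 q.2)) ^ 2) ≤ R * (1 + CrNorm r T u) * N :=
    (sqrt_integral_sq_le_of_ae_abs_le hB hφ hh (ae_abs_exp_mul_forcing_le hσ hu h)).trans
      (mul_le_mul_of_nonneg_left (Real.sqrt_le_iff.2 ⟨hN, hhN⟩) hB)
  calc _ ≤ 2 * √(kernelConst r T) * √(∫ q in Ioc 0 T ×ˢ Ioi 0,
          (exp (-r * q.2) * (σ q.2 (u q.1 q.2) * h q.1 q.2)) ^ 2) * |s - t| ^ (1 / 4 : ℝ) :=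
        abs_exp_mul_dirichletDuhamel_sub_le hs ht hx hφ
    _ ≤ 2 * √(kernelConst r T) * (R * (1 + CrNorm r T u) * N) * |s - t| ^ (1 / 4 : ℝ) := by gcongr
    _ = _ := by ring

/-- as in (4.14) of the paper: temporal Hölder continuity of the weighted
convolution `F`. -/
theorem stmt_15 (r T p : ℝ) (hT : 0 < T) (hp : 4 < p) :
    ∃ C > (0:ℝ), ∀ R N : ℝ, 0 < R → 1 ≤ N →
      ∀ σ : ℝ → ℝ → ℝ,
        Measurable (Function.uncurry σ) →
        (∀ x ≥ (0:ℝ), ∀ u : ℝ, |σ x u| ≤ R * (Real.exp (r * x) + |u|)) →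
      ∀ u : ℝ → ℝ → ℝ,
        ContinuousOn (Function.uncurry u) (Icc 0 T ×ˢ Ici 0) → CrBdd r T u →
      ∀ h : ℝ → ℝ → ℝ,
        Measurable (Function.uncurry h) →
        IntegrableOn (fun q : ℝ × ℝ => (h q.1 q.2) ^ 2) (Ioc 0 T ×ˢ Ioi 0) →
        (∫ q in (Ioc (0:ℝ) T ×ˢ Ioi (0:ℝ)), (h q.1 q.2) ^ 2) ≤ N ^ 2 →
      ∀ s ∈ Icc (0:ℝ) T, ∀ t ∈ Icc (0:ℝ) T, ∀ x ≥ (0:ℝ),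
        |Real.exp (-r * x) *
              (∫ s' in Ioc (0:ℝ) s, ∫ z in Ioi (0:ℝ), G (s - s') x z * σ z (u s' z) * h s' z) -
            Real.exp (-r * x) *
              (∫ s' in Ioc (0:ℝ) t, ∫ z in Ioi (0:ℝ), G (t - s') x z * σ z (u s' z) * h s' z)| ^ p
          ≤ C * R ^ p * N ^ p * T * (1 + CrNorm r T u) ^ p * |s - t| ^ ((p - 4) / 4) := by
  obtain ⟨C, hC, hF⟩ := stmt_15_general r hT.le
  refine ⟨C ^ p, by positivity, fun R N hR hN σ hσ_meas hσ u hu hu_bdd h hh_meas hh_int hhN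
    s hs t ht x hx => ?_⟩
  have hN_nonneg : 0 ≤ N := zero_le_one.trans hN
  have hM : 0 ≤ 1 + CrNorm r T u := by linarith [CrNorm_nonneg r T u]
  have hu_meas : AEMeasurable (Function.uncurry u) (volume.restrict (Ioc 0 T ×ˢ Ioi 0)) :=
    (hu.mono (prod_mono Ioc_subset_Icc_self Ioi_subset_Ici_self)).aemeasurable
      (measurableSet_Ioc.prod measurableSet_Ioi)
  have hh := (memLp_two_iff_integrable_sq hh_meas.aestronglyMeasurable).2 hh_int
  have hHolder := hF R N hN_nonneg σ hσ_meas hσ u hu_meas hu_bdd h hh hhN s hs t ht x hx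
  simp only [dirichletDuhamel, ← mul_assoc] at hHolder
  have hst : |s - t| ≤ T := abs_sub_le_of_nonneg_of_le hs.1 hs.2 ht.1 ht.2
  refine (rpow_le_of_le_mul_rpow_one_fourth (abs_nonneg _) (by positivity) (abs_nonneg _) hst
    hp.le hHolder).trans_eq ?_
  rw [Real.mul_rpow (by positivity) hM, Real.mul_rpow (by positivity) hN_nonneg,
    Real.mul_rpow hC.le hR.le]
  ring
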